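/- If the stationary Chang's Conjecture holds and ω₁ →^poly (par(<ω₁))²_{<ω₁-t-bdd} holds, then ω₂ →^poly (ω₁-st)²_{<ω₂-t-bdd}; in particular, every normal ω-bounded coloring f:[ω₂]²→ω₂ admits an f-rainbow subset A of order type ω₁ that is stationary in sup A. -/

import Mathlib

open Set Cardinal Ordinal

universe u

/-- `A` has order type `θ`: there is an order isomorphism from `Iio θ` onto `A`. -/
def HasOType (A : Set Ordinal.{u}) (θ : Ordinal.{u}) : Prop :=
  Nonempty (Set.Iio θ ≃o A)

/-- The order type of `A` is at most `γ`: `A` order-embeds into `Iio γ`. -/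
def OTypeLE (A : Set Ordinal.{u}) (γ : Ordinal.{u}) : Prop :=
  Nonempty (A ↪o Set.Iio γ)

/-- `A` is `f`-rainbow: `f` is injective on increasing pairs from `A`. -/
def IsRainbow (f : Ordinal → Ordinal → Ordinal) (A : Set Ordinal) : Prop :=
  ∀ α ∈ A, ∀ β ∈ A, ∀ γ ∈ A, ∀ δ ∈ A,
    α < β → γ < δ → f α β = f γ δ → α = γ ∧ β = δ

/-- `f` is a normal coloring on pairs below `κ`: equal colors force equal top points. -/
def IsNormalColoring (f : Ordinal → Ordinal → Ordinal) (κ : Ordinal) : Prop :=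
  ∀ α β γ δ : Ordinal, α < β → β < κ → γ < δ → δ < κ → f α β = f γ δ → β = δ

/-- `f` is 2-bounded: every fiber of `f` on pairs below `κ` has at most two elements. -/
def TwoBounded (f : Ordinal → Ordinal → Ordinal) (κ : Ordinal) : Prop :=
  ∀ ξ : Ordinal, {p : Ordinal × Ordinal | p.1 < p.2 ∧ p.2 < κ ∧ f p.1 p.2 = ξ}.encard ≤ 2

/-- `f` is `<ω`-bounded: every fiber of `f` on pairs below `κ` is finite. -/
def FinBounded (f : Ordinal → Ordinal → Ordinal) (κ : Ordinal) : Prop :=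
  ∀ ξ : Ordinal, {p : Ordinal × Ordinal | p.1 < p.2 ∧ p.2 < κ ∧ f p.1 p.2 = ξ}.Finite

/-- `f` is `ω`-bounded: every fiber of `f` on pairs below `κ` is countable. -/
def OmegaBounded (f : Ordinal → Ordinal → Ordinal) (κ : Ordinal) : Prop :=
  ∀ ξ : Ordinal, {p : Ordinal × Ordinal | p.1 < p.2 ∧ p.2 < κ ∧ f p.1 p.2 = ξ}.Countable

/-- `A` is a closed set of ordinals: any nonzero `α` below `sup A` which is the
supremum of the elements of `A` below it belongs to `A`. -/
def IsClosedSet (A : Set Ordinal) : Prop :=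
  ∀ α : Ordinal, α < sSup A → α ≠ 0 → sSup (A ∩ Set.Iio α) = α → α ∈ A

/-- `C` is club in `δ`: a subset of `δ`, unbounded in `δ`, and closed below `δ`. -/
def IsClubIn (C : Set Ordinal) (δ : Ordinal) : Prop :=
  C ⊆ Set.Iio δ ∧ (∀ α < δ, ∃ β ∈ C, α ≤ β) ∧
  ∀ α : Ordinal, α < δ → α ≠ 0 → sSup (C ∩ Set.Iio α) = α → α ∈ C

/-- `A` is stationary in `δ`: it meets every club in `δ`. -/
def IsStationaryIn (A : Set Ordinal) (δ : Ordinal) : Prop :=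
  ∀ C : Set Ordinal, IsClubIn C δ → (A ∩ C).Nonempty

/-- `f` is `<bd`-type bounded on pairs below `κ`: some `γ < bd` bounds the order
type of every color class `t_{ηβ} = {ξ < β | f ξ β = f η β}`. -/
def TypeBounded (f : Ordinal → Ordinal → Ordinal) (κ bd : Ordinal) : Prop :=
  ∃ γ < bd, ∀ η β : Ordinal, η < β → β < κ →
    OTypeLE {ξ : Ordinal | ξ < β ∧ f ξ β = f η β} γ

/-- `f` is `<bd`-type bounded relative to the set `A`. -/
def TypeBoundedOn (f : Ordinal → Ordinal → Ordinal) (A : Set Ordinal) (bd : Ordinal) : Prop :=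
  ∃ γ < bd, ∀ η ∈ A, ∀ β ∈ A, η < β →
    OTypeLE {ξ : Ordinal | ξ ∈ A ∧ ξ < β ∧ f ξ β = f η β} γ

/-- The stationary Chang's Conjecture: every `e : [ω₂]^{<ω} → ω₁` admits `A ⊆ ω₂` of
order type `ω₁`, stationary in its supremum, with `e''[A]^{<ω}` countable. -/
def StationaryChang : Prop :=
  ∀ e : Finset Ordinal.{0} → Ordinal.{0},
    (∀ s : Finset Ordinal.{0}, ↑s ⊆ Set.Iio (Cardinal.aleph 2).ord →
      e s < (Cardinal.aleph 1).ord) →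
    ∃ A : Set Ordinal.{0}, A ⊆ Set.Iio (Cardinal.aleph 2).ord ∧
      HasOType A (Cardinal.aleph 1).ord ∧ IsStationaryIn A (sSup A) ∧
      {ξ : Ordinal.{0} | ∃ s : Finset Ordinal.{0}, ↑s ⊆ A ∧ e s = ξ}.Countable

/-!
Ranking each color class of `f` embeds it into one fixed `γ < ω₂`, and `γ` injects into `ω₁`, so
the stationary Chang's Conjecture yields a set `A` of order type `ω₁`, stationary in its supremum,
on whose pairs only countably many ranks occur. Since ranks increase along a color class, `f` is
`<ω₁`-type bounded on `A`. Copying `f` on `A` to `ω₁`, the partition relation covers `A` by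
countably many rainbow sets. As `sup A` has cofinality `ω₁`, a countable union of sets
nonstationary in `sup A` is nonstationary, so one of these rainbow sets is stationary in `sup A`;
it is then unbounded in `A`, hence has order type `ω₁`.
-/

universe v w x

theorem nonempty_orderIso_Iio_iff {α : Type v} [LinearOrder α] [WellFoundedLT α]
    {o : Ordinal.{u}} :
    Nonempty (α ≃o Iio o) ↔ Ordinal.lift.{u} (typeLT α) = Ordinal.lift.{v} o := by
  have htype : Ordinal.lift.{u} (typeLT α) = Ordinal.lift.{v} (typeLT o.ToType) ↔
      Nonempty ((· < · : α → α → Prop) ≃r (· < · : o.ToType → o.ToType → Prop)) :=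
    Ordinal.lift_type_eq.{v, u, 0}
  rw [← o.type_toType, htype, o.type_toType]
  exact ⟨fun ⟨φ⟩ => ⟨(φ.trans Ordinal.ToType.mk).toRelIsoLT⟩,
    fun ⟨φ⟩ => ⟨(OrderIso.ofRelIsoLT φ).trans Ordinal.ToType.mk.symm⟩⟩

theorem nonempty_orderIso_Iio_of_lift_eq {o : Ordinal.{u}} {o' : Ordinal.{v}}
    (h : Ordinal.lift.{v} o = Ordinal.lift.{u} o') : Nonempty (Iio o ≃o Iio o') := by
  rw [nonempty_orderIso_Iio_iff, Ordinal.type_lt_Iio]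
  simpa using congrArg Ordinal.lift.{u + 1} h

theorem exists_orderIso_Iio_of_mk_lt {α : Type v} [LinearOrder α] [WellFoundedLT α]
    {κ : Cardinal.{u}} (h : Cardinal.lift.{u} #α < Cardinal.lift.{v} κ) :
    ∃ γ < κ.ord, Nonempty (α ≃o Iio γ) := by
  have hlt : Ordinal.lift.{u} (typeLT α) < Ordinal.lift.{v} κ.ord := by
    rwa [Cardinal.lift_ord, Cardinal.lt_ord, ← Ordinal.lift_card, Ordinal.card_type]
  obtain ⟨γ, hγ, hγκ⟩ := Ordinal.lt_lift_iff.1 hlt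
  exact ⟨γ, hγ, nonempty_orderIso_Iio_iff.2 hγκ.symm⟩

theorem exists_orderIso_Iio_of_countable {s : Set Ordinal.{v}} (hs : s.Countable) :
    ∃ γ < (ℵ_ 1 : Cardinal.{u}).ord, Nonempty (s ≃o Iio γ) :=
  exists_orderIso_Iio_of_mk_lt <| by
    rw [← Cardinal.le_aleph0_iff_set_countable, ← Cardinal.lt_aleph_one_iff] at hs
    simpa using Cardinal.lift_lt.{_, u}.2 hs

theorem IsClubIn.isClub_preimage_coe {C : Set Ordinal.{u}} {δ : Ordinal.{u}} (hC : IsClubIn C δ) :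
    IsClub ((↑) ⁻¹' C : Set (Iio δ)) where
  dirSupClosed d hdC hd _ a ha := by
    by_cases had : a ∈ d
    · exact hdC had
    have hlt : ∀ x ∈ d, x < a := fun x hx => (ha.1 hx).lt_of_ne fun h => had (h ▸ hx)
    obtain ⟨x₀, hx₀⟩ := hd
    have hpos : (0 : Ordinal) < a := zero_le.trans_lt (show (x₀ : Ordinal) < a from hlt x₀ hx₀)
    refine hC.2.2 a a.2 hpos.ne' ?_
    have hle : sSup (C ∩ Iio (a : Ordinal)) ≤ a := csSup_le' fun x hx => hx.2.le
    refine hle.antisymm (ha.2 (show ⟨_, hle.trans_lt a.2⟩ ∈ upperBounds d from fun x hx => ?_))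
    exact le_csSup ⟨(a : Ordinal), fun y hy => hy.2.le⟩ ⟨hdC hx, hlt x hx⟩
  isCofinal x :=
    have ⟨β, hβ, hxβ⟩ := hC.2.1 x x.2
    ⟨⟨β, hC.1 hβ⟩, hβ, hxβ⟩

theorem isClubIn_image_coe {δ : Ordinal.{u}} {D : Set (Iio δ)} (hD : IsClub D) :
    IsClubIn ((↑) '' D : Set Ordinal) δ := by
  refine ⟨image_subset_iff.2 fun x _ => x.2, fun α hα => ?_, fun α hα h0 hsup => ?_⟩
  · obtain ⟨x, hxD, hαx⟩ := hD.isCofinal ⟨α, hα⟩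
    exact ⟨x, mem_image_of_mem _ hxD, hαx⟩
  · obtain ⟨_, ⟨y, hyD, rfl⟩, hyα⟩ : (((↑) '' D : Set Ordinal) ∩ Iio α).Nonempty := by
      by_contra! hempty
      exact h0 (by rw [← hsup, hempty, csSup_empty, bot_eq_zero])
    have hlub : IsLUB {x ∈ D | (x : Ordinal) < α} ⟨α, hα⟩ := by
      refine ⟨fun x hx => hx.2.le, fun b hb => hsup.symm.trans_le (csSup_le' ?_)⟩
      rintro _ ⟨⟨x, hxD, rfl⟩, hxα⟩
      exact hb ⟨hxD, hxα⟩
    exact ⟨_, hD.isLUB_mem (sep_subset _ _) ⟨y, hyD, hyα⟩ hlub, rfl⟩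

theorem isStationaryIn_iff_isStationary {A : Set Ordinal.{u}} {δ : Ordinal.{u}} :
    IsStationaryIn A δ ↔ IsStationary ((↑) ⁻¹' A : Set (Iio δ)) := by
  refine ⟨fun h D hD => ?_, fun h C hC => ?_⟩
  · obtain ⟨_, hxA, x, hxD, rfl⟩ := h _ (isClubIn_image_coe hD)
    exact ⟨x, hxA, hxD⟩
  · obtain ⟨x, hxA, hxC⟩ := h hC.isClub_preimage_coe
    exact ⟨x, hxA, hxC⟩

theorem isClub_preimage_orderIso {α β : Type*} [LinearOrder α] [LinearOrder β]
    (φ : α ≃o β) {s : Set β} (hs : IsClub s) : IsClub (φ ⁻¹' s) where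
  dirSupClosed _ hds hd _ _ ha :=
    hs.isLUB_mem (image_subset_iff.2 hds) (hd.image φ) (φ.isLUB_image'.2 ha)
  isCofinal x :=
    have ⟨y, hy, hxy⟩ := hs.isCofinal (φ x)
    ⟨φ.symm y, by simpa using hy, φ.le_symm_apply.2 hxy⟩

theorem isStationary_preimage_orderIso {α β : Type*} [LinearOrder α] [LinearOrder β]
    (φ : α ≃o β) {s : Set β} (hs : IsStationary s) : IsStationary (φ ⁻¹' s) := fun t ht => by
  obtain ⟨y, hys, hyt⟩ := hs (isClub_preimage_orderIso φ.symm ht)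
  exact ⟨φ.symm y, by simpa using hys, hyt⟩

theorem isCofinal_of_isStationary {α : Type*} [LinearOrder α] {s : Set α}
    (hs : IsStationary s) : IsCofinal s := fun x =>
  hs ⟨(isUpperSet_Ici x).dirSupClosed, fun y => ⟨max x y, le_max_left x y, le_max_right x y⟩⟩

theorem IsStationaryIn.exists_ge {A : Set Ordinal.{u}} {δ α : Ordinal.{u}}
    (hA : IsStationaryIn A δ) (hα : α < δ) : ∃ β ∈ A, α ≤ β :=
  have ⟨β, hβ, hαβ⟩ := isCofinal_of_isStationary (isStationaryIn_iff_isStationary.1 hA) ⟨α, hα⟩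
  ⟨β, hβ, hαβ⟩

theorem IsStationaryIn.exists_of_sUnion {𝓑 : Set (Set Ordinal.{u})} {δ : Ordinal.{u}}
    (h : IsStationaryIn (⋃₀ 𝓑) δ) (hδ : δ.cof ≠ ℵ₀) (h𝓑 : 𝓑.Countable) :
    ∃ B ∈ 𝓑, IsStationaryIn B δ := by
  have hcof : Order.cof (Iio δ) ≠ ℵ₀ := by
    rwa [Ordinal.cof_Iio, ← Ordinal.lift_cof, Ne, Cardinal.lift_eq_aleph0]
  have hunion : ((↑) ⁻¹' ⋃₀ 𝓑 : Set (Iio δ)) = ⋃₀ ((fun B => (↑) ⁻¹' B) '' 𝓑) := by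
    rw [sUnion_image, preimage_sUnion]
  rw [isStationaryIn_iff_isStationary, hunion,
    isStationary_sUnion_iff_of_countable hcof (h𝓑.image _)] at h
  obtain ⟨_, ⟨B, hB, rfl⟩, hst⟩ := h
  exact ⟨B, hB, isStationaryIn_iff_isStationary.2 hst⟩

theorem HasOType.lt_sSup {A : Set Ordinal.{u}} {θ a : Ordinal.{u}} (hA : HasOType A θ)
    (hθ : Order.IsSuccPrelimit θ) (hbdd : BddAbove A) (ha : a ∈ A) : a < sSup A := by
  obtain ⟨π⟩ := hA
  have hlt : Order.succ (π.symm ⟨a, ha⟩ : Ordinal) < θ := hθ.succ_lt (π.symm ⟨a, ha⟩).2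
  calc a = π (π.symm ⟨a, ha⟩) := by rw [π.apply_symm_apply]
    _ < π ⟨_, hlt⟩ := π.strictMono (Order.lt_succ (π.symm ⟨a, ha⟩ : Ordinal))
    _ ≤ sSup A := le_csSup hbdd (π _).2

theorem HasOType.cof_sSup {A : Set Ordinal.{u}} {θ : Ordinal.{u}} (hA : HasOType A θ)
    (hθ : Order.IsSuccPrelimit θ) : (sSup A).cof = θ.cof := by
  obtain ⟨π⟩ := hA
  have hmono : StrictMono fun i => (π i : Ordinal) := fun _ _ hij => π.strictMono hij
  rw [← Ordinal.cof_iSup_Iio hmono hθ, iSup]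
  congr 2
  exact ((π.surjective.range_comp ((↑) : A → Ordinal)).trans Subtype.range_coe).symm

theorem hasOType_iff_type_eq {A : Set Ordinal.{u}} {θ : Ordinal.{u}} :
    HasOType A θ ↔ typeLT A = Ordinal.lift.{u + 1} θ := by
  rw [← Ordinal.lift_id'.{u, u + 1} (typeLT A), ← nonempty_orderIso_Iio_iff]
  exact ⟨fun ⟨π⟩ => ⟨π.symm⟩, fun ⟨π⟩ => ⟨π.symm⟩⟩

theorem HasOType.of_forall_exists_ge {A B : Set Ordinal.{u}} {κ : Cardinal.{u}}
    (hA : HasOType A κ.ord) (hκ : κ.IsRegular) (hBA : B ⊆ A) (hAB : ∀ a ∈ A, ∃ b ∈ B, a ≤ b) :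
    HasOType B κ.ord := by
  have hcof : Order.cof A = Cardinal.lift.{u + 1} κ := by
    rw [← Ordinal.cof_type, hasOType_iff_type_eq.1 hA, ← Ordinal.lift_cof, hκ.cof_ord]
  have : IsRegularCardinalOrder A :=
    ⟨by rw [hcof, hasOType_iff_type_eq.1 hA, Cardinal.lift_ord]⟩
  have hcofinal : IsCofinal ((↑) ⁻¹' B : Set A) := fun a =>
    have ⟨b, hb, hab⟩ := hAB a a.2
    ⟨⟨b, hBA hb⟩, hb, hab⟩
  obtain ⟨π⟩ := hA
  let restrict : ((↑) ⁻¹' B : Set A) ≃o B :=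
    ((Subtype.strictMono_coe (· ∈ A)).strictMonoOn _).orderIso.trans
      (OrderIso.setCongr _ _ (Subtype.image_preimage_coe A B |>.trans (inter_eq_right.2 hBA)))
  exact ⟨(π.trans (Order.enum _ hcofinal)).trans restrict⟩

theorem HasOType.exists_isStationaryIn_of_sUnion {𝓑 : Set (Set Ordinal.{u})} {κ : Cardinal.{u}}
    (hκ : κ.IsRegular) (hκ₀ : ℵ₀ < κ) (h𝓑 : 𝓑.Countable) (hbdd : BddAbove (⋃₀ 𝓑))
    (htype : HasOType (⋃₀ 𝓑) κ.ord) (hst : IsStationaryIn (⋃₀ 𝓑) (sSup (⋃₀ 𝓑))) :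
    ∃ B ∈ 𝓑, HasOType B κ.ord ∧ IsStationaryIn B (sSup B) := by
  have hlim := (Cardinal.isSuccLimit_ord hκ₀.le).isSuccPrelimit
  have hcof : (sSup (⋃₀ 𝓑)).cof ≠ ℵ₀ := by
    rw [htype.cof_sSup hlim, hκ.cof_ord]
    exact hκ₀.ne'
  obtain ⟨B, hB, hBst⟩ := hst.exists_of_sUnion hcof h𝓑
  have hBA : B ⊆ ⋃₀ 𝓑 := subset_sUnion_of_mem hB
  have hcofinal : ∀ a ∈ ⋃₀ 𝓑, ∃ b ∈ B, a ≤ b := fun a ha =>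
    hBst.exists_ge (htype.lt_sSup hlim hbdd ha)
  have hsup : sSup B = sSup (⋃₀ 𝓑) := by
    refine (csSup_le_csSup' hbdd hBA).antisymm (csSup_le' fun a ha => ?_)
    obtain ⟨b, hb, hab⟩ := hcofinal a ha
    exact hab.trans (le_csSup (hbdd.mono hBA) hb)
  exact ⟨B, hB, htype.of_forall_exists_ge hκ hBA hcofinal, hsup ▸ hBst⟩

theorem exists_injOn_Iio_ord {X : Type w} {K : Set X} {κ : Cardinal.{u}} (hκ : κ ≠ 0)
    (hK : Cardinal.lift.{u} #K ≤ Cardinal.lift.{w} κ) :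
    ∃ c : X → Iio κ.ord, InjOn c K := by
  have : Nonempty (Iio κ.ord) := ⟨⟨0, by simpa [Cardinal.lt_ord, pos_iff_ne_zero]⟩⟩
  rw [Set.exists_injOn_iff_injective]
  have hmk : Cardinal.lift.{u + 1} #K ≤ Cardinal.lift.{w} #(Iio κ.ord) := by
    simpa [Cardinal.mk_Iio_ordinal] using Cardinal.lift_le.{u + 1}.2 hK
  obtain ⟨c⟩ := Cardinal.lift_mk_le'.1 hmk
  exact ⟨c, c.injective⟩

theorem sSup_image_lift {A : Set Ordinal.{u}} (hA : BddAbove A) :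
    sSup (Ordinal.lift.{v} '' A) = Ordinal.lift.{v} (sSup A) := by
  rcases A.eq_empty_or_nonempty with rfl | hne
  · simp
  · exact (Ordinal.liftInitialSeg.isNormal.map_sSup hne hA).symm

/-- The isomorphism between the initial segments `δ` in two universes, given by `Ordinal.lift`,
along which order types and stationarity are transported. -/
noncomputable def liftIioOrderIso (δ : Ordinal.{u}) : Iio δ ≃o Iio (Ordinal.lift.{v} δ) :=
  ((Ordinal.liftInitialSeg.{v, u}.strictMono.strictMonoOn _).orderIso).trans
    (OrderIso.setCongr _ _ (Ordinal.liftInitialSeg.image_Iio δ))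

theorem HasOType.image_lift {A : Set Ordinal.{u}} {θ : Ordinal.{u}} (hA : HasOType A θ) :
    HasOType (Ordinal.lift.{v} '' A) (Ordinal.lift.{v} θ) := by
  obtain ⟨π⟩ := hA
  exact ⟨((liftIioOrderIso θ).symm.trans π).trans
    ((Ordinal.liftInitialSeg.strictMono.strictMonoOn A).orderIso)⟩

theorem IsStationaryIn.image_lift {A : Set Ordinal.{u}} {δ : Ordinal.{u}}
    (hA : IsStationaryIn A δ) : IsStationaryIn (Ordinal.lift.{v} '' A) (Ordinal.lift.{v} δ) := by
  rw [isStationaryIn_iff_isStationary] at hA ⊢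
  refine (isStationary_preimage_orderIso (liftIioOrderIso.{u, v} δ).symm hA).mono fun y hy => ?_
  refine ⟨_, hy, ?_⟩
  exact congrArg Subtype.val ((liftIioOrderIso.{u, v} δ).apply_symm_apply y)

theorem StationaryChang.exists_forall_pair_mem_countable (hscc : StationaryChang) {X : Type w}
    {K : Set X} (hK : #K ≤ ℵ_ 1) (e : Ordinal.{u} → Ordinal.{u} → X)
    (he : ∀ α β, α < β → β < (ℵ_ 2).ord → e α β ∈ K) :
    ∃ A : Set Ordinal.{u}, A ⊆ Iio (ℵ_ 2).ord ∧ HasOType A (ℵ_ 1).ord ∧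
      IsStationaryIn A (sSup A) ∧
      ∃ D : Set X, D.Countable ∧ ∀ α ∈ A, ∀ β ∈ A, α < β → e α β ∈ D := by
  obtain ⟨c, hc⟩ := exists_injOn_Iio_ord.{0} (Cardinal.aleph_pos 1).ne' (K := K) (by simpa using hK)
  -- Off the pairs below `ω₂` this may leave `K`, where `c` need not be injective.
  let pairColor (s : Finset Ordinal.{0}) : X :=
    e (Ordinal.lift (sInf (s : Set Ordinal))) (Ordinal.lift (sSup (s : Set Ordinal)))
  obtain ⟨A, hA, htype, hst, hcount⟩ := hscc (fun s => c (pairColor s)) fun s _ => (c _).2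
  have hbdd : BddAbove A := bddAbove_Iio.mono hA
  have hliftA : Ordinal.lift.{u} '' A ⊆ Iio (ℵ_ 2).ord := by
    rintro _ ⟨α, hα, rfl⟩
    simpa using hA hα
  refine ⟨Ordinal.lift.{u} '' A, hliftA, by simpa using htype.image_lift.{0, u},
    by simpa only [sSup_image_lift hbdd] using hst.image_lift,
    K ∩ pairColor '' {s | ↑s ⊆ A},
    countable_of_injective_of_countable_image (hc.mono inter_subset_left) ?_, ?_⟩
  · refine (hcount.preimage Subtype.val_injective).mono ?_
    rintro _ ⟨_, ⟨_, s, hs, rfl⟩, rfl⟩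
    exact ⟨s, hs, rfl⟩
  · rintro _ ⟨α, hα, rfl⟩ _ ⟨β, hβ, rfl⟩ hαβ
    refine ⟨he _ _ hαβ (hliftA (mem_image_of_mem _ hβ)), {α, β}, ?_, ?_⟩
    · simp [insert_subset_iff, hα, hβ]
    · simp [pairColor, (Ordinal.lift_lt.1 hαβ).le]

theorem exists_strictMonoOn_extension {α β : Type*} [Preorder α] [Preorder β] [Nonempty β]
    {S : Set α} {g : S → β} (hg : StrictMono g) :
    ∃ r : α → β, StrictMonoOn r S ∧ ∀ x : S, r x = g x := by
  have ⟨b⟩ := ‹Nonempty β›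
  have hext : ∀ x : S, Function.extend (↑) g (fun _ => b) x.1 = g x :=
    Subtype.val_injective.extend_apply g _
  refine ⟨Function.extend (↑) g fun _ => b, fun x hx y hy hxy => ?_, hext⟩
  rw [hext ⟨x, hx⟩, hext ⟨y, hy⟩]
  exact hg hxy

theorem OTypeLE.exists_strictMonoOn {T : Set Ordinal.{u}} {γ : Ordinal.{u}} (hT : OTypeLE T γ) :
    ∃ r : Ordinal.{u} → Ordinal.{u}, MapsTo r T (Iio γ) ∧ StrictMonoOn r T := by
  obtain ⟨φ⟩ := hT
  obtain ⟨r, hr, hrφ⟩ := exists_strictMonoOn_extension (g := fun x => (φ x : Ordinal)) φ.strictMono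
  exact ⟨r, fun x hx => (hrφ ⟨x, hx⟩).trans_lt (φ _).2, hr⟩

theorem oTypeLE_of_strictMonoOn {S : Set Ordinal.{u}} {T : Set Ordinal.{v}} {γ : Ordinal.{u}}
    (φ : T ↪o Iio γ) {p : Ordinal.{u} → Ordinal.{v}} (hp : StrictMonoOn p S) (hST : MapsTo p S T) :
    OTypeLE S γ :=
  ⟨.ofStrictMono (fun x => φ ⟨p x, hST x.2⟩) fun x y hxy => φ.strictMono (hp x.2 y.2 hxy)⟩

theorem OmegaBounded.typeBounded {f : Ordinal.{u} → Ordinal.{u} → Ordinal.{v}}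
    {κ bd : Ordinal.{u}} (hf : OmegaBounded f κ) (hbd : (ℵ_ 1).ord < bd) : TypeBounded f κ bd := by
  refine ⟨_, hbd, fun η β _ hβ => ?_⟩
  have hcount : {ξ | ξ < β ∧ f ξ β = f η β}.Countable := by
    refine ((hf (f η β)).image Prod.fst).mono ?_
    rintro ξ ⟨hξβ, hξ⟩
    exact ⟨(ξ, β), ⟨hξβ, hβ, hξ⟩, rfl⟩
  obtain ⟨γ, hγ, ⟨φ⟩⟩ := exists_orderIso_Iio_of_countable hcount
  exact ⟨φ.toOrderEmbedding.trans (Subtype.orderEmbedding (Iio_subset_Iio hγ.le))⟩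

theorem TypeBounded.exists_rank {f : Ordinal.{u} → Ordinal.{u} → Ordinal.{v}}
    {κ bd : Ordinal.{u}} (hf : TypeBounded f κ bd) :
    ∃ γ < bd, ∃ e : Ordinal.{u} → Ordinal.{u} → Ordinal.{u},
      (∀ ξ β, ξ < β → β < κ → e ξ β < γ) ∧
      ∀ ξ ζ β, ξ < ζ → ζ < β → β < κ → f ξ β = f ζ β → e ξ β < e ζ β := by
  obtain ⟨γ, hγ, hle⟩ := hf
  have hrank : ∀ T : Set Ordinal.{u}, OTypeLE T γ →
    ∃ r : Ordinal.{u} → Ordinal.{u}, MapsTo r T (Iio γ) ∧ StrictMonoOn r T :=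
    fun T hT => hT.exists_strictMonoOn
  choose! r hmaps hmono using hrank
  refine ⟨γ, hγ, fun ξ β => r {ζ | ζ < β ∧ f ζ β = f ξ β} ξ, fun ξ β hξβ hβ => ?_,
    fun ξ ζ β hξζ hζβ hβ hfeq => ?_⟩
  · exact hmaps _ (hle ξ β hξβ hβ) ⟨hξβ, rfl⟩
  · simp only [hfeq]
    exact hmono _ (hle ζ β hζβ hβ) ⟨hξζ.trans hζβ, hfeq⟩ ⟨hζβ, rfl⟩ hξζ

theorem StationaryChang.exists_typeBoundedOn (hscc : StationaryChang)
    {f : Ordinal.{u} → Ordinal.{u} → Ordinal.{v}} (hf : TypeBounded f (ℵ_ 2).ord (ℵ_ 2).ord) :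
    ∃ A : Set Ordinal.{u}, A ⊆ Iio (ℵ_ 2).ord ∧ HasOType A (ℵ_ 1).ord ∧
      IsStationaryIn A (sSup A) ∧ TypeBoundedOn f A (ℵ_ 1).ord := by
  obtain ⟨γ, hγ, e, heγ, hemono⟩ := hf.exists_rank
  have hcard : #(Iio γ) ≤ ℵ_ 1 := by
    have hγ₁ : γ.card ≤ ℵ_ 1 := by
      rwa [Cardinal.lt_ord, ← one_add_one_eq_two, ← Cardinal.succ_aleph,
        Order.lt_succ_iff] at hγ
    simpa [Cardinal.mk_Iio_ordinal] using Cardinal.lift_le.{u + 1}.2 hγ₁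
  obtain ⟨A, hA, htype, hst, D, hD, heD⟩ := hscc.exists_forall_pair_mem_countable hcard e heγ
  obtain ⟨γ', hγ', ⟨φ⟩⟩ := exists_orderIso_Iio_of_countable hD
  refine ⟨A, hA, htype, hst, γ', hγ', fun η _ β hβ _ =>
    oTypeLE_of_strictMonoOn φ.toOrderEmbedding (p := fun ξ => e ξ β) ?_ ?_⟩
  · rintro ξ ⟨-, -, hξ⟩ ζ ⟨-, hζβ, hζ⟩ hξζ
    exact hemono ξ ζ β hξζ hζβ (hA hβ) (hξ.trans hζ.symm)
  · rintro ξ ⟨hξA, hξβ, -⟩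
    exact heD ξ hξA β hβ hξβ

theorem HasOType.exists_strictMonoOn {A : Set Ordinal.{u}} {θ : Ordinal.{u}} {θ' : Ordinal.{v}}
    (hA : HasOType A θ) (hθ : Ordinal.lift.{u} θ' = Ordinal.lift.{v} θ) :
    ∃ p : Ordinal.{v} → Ordinal.{u}, StrictMonoOn p (Iio θ') ∧ p '' Iio θ' = A := by
  obtain ⟨π⟩ := hA
  obtain ⟨ι⟩ := nonempty_orderIso_Iio_of_lift_eq hθ
  let e : Iio θ' ≃o A := ι.trans π
  obtain ⟨p, hp, hpe⟩ := exists_strictMonoOn_extension (g := fun x => (e x : Ordinal)) e.strictMono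
  refine ⟨p, hp, ?_⟩
  calc p '' Iio θ' = range fun x => (e x : Ordinal) := by
        rw [image_eq_range]
        exact congrArg range (funext hpe)
    _ = A := (e.surjective.range_comp ((↑) : A → Ordinal)).trans Subtype.range_coe

section Pullback

variable {f : Ordinal.{u} → Ordinal.{u} → Ordinal.{v}} {p : Ordinal.{w} → Ordinal.{u}}
  {c : Ordinal.{v} → Ordinal.{x}} {κ : Ordinal.{u}} {μ : Ordinal.{w}}

theorem IsNormalColoring.pullback (hf : IsNormalColoring f κ) (hp : StrictMonoOn p (Iio μ))
    (hpκ : p '' Iio μ ⊆ Iio κ) (hc : InjOn c (image2 f (p '' Iio μ) (p '' Iio μ))) :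
    IsNormalColoring (fun α β => c (f (p α) (p β))) μ := by
  intro α β γ δ hαβ hβ hγδ hδ hfeq
  have hmem : ∀ ξ < μ, p ξ ∈ p '' Iio μ := fun ξ => mem_image_of_mem p
  have hα := hαβ.trans hβ
  have hγ := hγδ.trans hδ
  have hcolor : f (p α) (p β) = f (p γ) (p δ) :=
    hc (mem_image2_of_mem (hmem α hα) (hmem β hβ)) (mem_image2_of_mem (hmem γ hγ) (hmem δ hδ)) hfeq
  exact hp.injOn hβ hδ (hf _ _ _ _ (hp hα hβ hαβ) (hpκ (hmem β hβ)) (hp hγ hδ hγδ)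
    (hpκ (hmem δ hδ)) hcolor)

theorem TypeBoundedOn.pullback {bd : Ordinal.{u}} {bd' : Ordinal.{w}}
    (hf : TypeBoundedOn f (p '' Iio μ) bd) (hbd : Ordinal.lift.{w} bd ≤ Ordinal.lift.{u} bd')
    (hp : StrictMonoOn p (Iio μ)) (hc : InjOn c (image2 f (p '' Iio μ) (p '' Iio μ))) :
    TypeBounded (fun α β => c (f (p α) (p β))) μ bd' := by
  obtain ⟨γ, hγ, hle⟩ := hf
  obtain ⟨γ', hγ', hlift⟩ := Ordinal.lt_lift_iff.1 ((Ordinal.lift_lt.2 hγ).trans_le hbd)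
  obtain ⟨ι⟩ := nonempty_orderIso_Iio_of_lift_eq hlift.symm
  refine ⟨γ', hγ', fun η β hηβ hβ => ?_⟩
  have hmem : ∀ ξ < μ, p ξ ∈ p '' Iio μ := fun ξ => mem_image_of_mem p
  have hη := hηβ.trans hβ
  obtain ⟨φ⟩ := hle _ (hmem η hη) _ (hmem β hβ) (hp hη hβ hηβ)
  refine oTypeLE_of_strictMonoOn (φ.trans ι.toOrderEmbedding)
    (hp.mono fun ξ hξ => hξ.1.trans hβ) fun ξ hξ => ?_
  have hξμ := hξ.1.trans hβ
  exact ⟨hmem ξ hξμ, hp hξμ hβ hξ.1, hc (mem_image2_of_mem (hmem ξ hξμ) (hmem β hβ))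
    (mem_image2_of_mem (hmem η hη) (hmem β hβ)) hξ.2⟩

theorem IsRainbow.image {S : Set Ordinal.{w}} (hp : StrictMonoOn p S)
    (h : IsRainbow (fun α β => c (f (p α) (p β))) S) : IsRainbow f (p '' S) := by
  rintro _ ⟨α, hα, rfl⟩ _ ⟨β, hβ, rfl⟩ _ ⟨γ, hγ, rfl⟩ _ ⟨δ, hδ, rfl⟩ hαβ hγδ hfeq
  obtain ⟨rfl, rfl⟩ := h α hα β hβ γ hγ δ hδ ((hp.lt_iff_lt hα hβ).1 hαβ)
    ((hp.lt_iff_lt hγ hδ).1 hγδ) (congrArg c hfeq)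
  exact ⟨rfl, rfl⟩

end Pullback

/-- The partition relation `ω₁ →^poly (par(<ω₁))²_{<ω₁-t-bdd}`. The colors and the indices of the
rainbow pieces may live in universes other than that of the colored ordinals. -/
def OmegaOneRainbowPartition.{a, b, k} : Prop :=
  ∀ f : Ordinal.{a} → Ordinal.{a} → Ordinal.{b},
    (∀ α β : Ordinal, α < β → β < (ℵ_ 1).ord → f α β < (ℵ_ 1).ord) →
    IsNormalColoring f (ℵ_ 1).ord → TypeBounded f (ℵ_ 1).ord (ℵ_ 1).ord →
    ∃ γ : Ordinal.{k}, γ < (ℵ_ 1).ord ∧ ∃ g : Ordinal.{a} → Ordinal.{k},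
      (∀ ξ : Ordinal, ξ < (ℵ_ 1).ord → g ξ < γ) ∧
      ∀ i : Ordinal, i < γ → IsRainbow f {ξ : Ordinal | ξ < (ℵ_ 1).ord ∧ g ξ = i}

theorem HasOType.lift_mk_image2_le {A : Set Ordinal.{u}} {κ : Cardinal.{u}}
    (hA : HasOType A κ.ord) (hκ : ℵ₀ ≤ κ) {X : Type w} (f : Ordinal.{u} → Ordinal.{u} → X) :
    Cardinal.lift.{u} #(image2 f A A) ≤ Cardinal.lift.{w} κ := by
  obtain ⟨π⟩ := hA
  have hmkA : #A = Cardinal.lift.{u + 1} κ := by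
    rw [← Cardinal.mk_congr π.toEquiv, Cardinal.mk_Iio_ordinal, Cardinal.card_ord]
  have hprod : #(A ×ˢ A : Set (Ordinal.{u} × Ordinal.{u})) = Cardinal.lift.{u + 1} κ := by
    rw [Cardinal.mk_setProd, hmkA, Cardinal.mul_eq_self (Cardinal.aleph0_le_lift.2 hκ)]
  have himage : Cardinal.lift.{u + 1} #(image2 f A A) ≤ Cardinal.lift.{w, u + 1} #(A ×ˢ A) := by
    rw [← image_uncurry_prod]
    exact Cardinal.mk_image_le_lift
  rw [hprod] at himage
  rw [← Cardinal.lift_le.{u + 1}]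
  simpa using himage

theorem OmegaOneRainbowPartition.exists_countable_sUnion_eq.{a, b, c, d, k}
    (hpar : OmegaOneRainbowPartition.{a, b, k}) {f : Ordinal.{c} → Ordinal.{c} → Ordinal.{d}}
    {κ : Ordinal.{c}} {A : Set Ordinal.{c}} (hA : HasOType A (ℵ_ 1).ord) (hAκ : A ⊆ Iio κ)
    (hf : IsNormalColoring f κ) (hb : TypeBoundedOn f A (ℵ_ 1).ord) :
    ∃ 𝓑 : Set (Set Ordinal.{c}), 𝓑.Countable ∧ ⋃₀ 𝓑 = A ∧ ∀ B ∈ 𝓑, IsRainbow f B := by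
  obtain ⟨p, hp, rfl⟩ := hA.exists_strictMonoOn (θ' := (ℵ_ 1 : Cardinal.{a}).ord) (by simp)
  obtain ⟨col, hcol⟩ := exists_injOn_Iio_ord.{b} (Cardinal.aleph_pos 1).ne'
    (K := image2 f (p '' Iio (ℵ_ 1).ord) (p '' Iio (ℵ_ 1).ord))
    (by simpa using hA.lift_mk_image2_le (Cardinal.aleph0_le_aleph 1) f)
  obtain ⟨γ, hγ, g, hgγ, hrain⟩ := hpar (fun α β => col (f (p α) (p β)))
    (fun α β _ _ => (col _).2)
    (hf.pullback hp hAκ (Subtype.val_injective.comp_injOn hcol))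
    (hb.pullback (by simp) hp (Subtype.val_injective.comp_injOn hcol))
  refine ⟨(fun i => p '' {ξ | ξ < (ℵ_ 1).ord ∧ g ξ = i}) '' Iio γ, ?_, ?_, ?_⟩
  · have : (Iio γ).Countable := by
      rw [← Cardinal.le_aleph0_iff_set_countable, Cardinal.mk_Iio_ordinal,
        Cardinal.lift_le_aleph0, ← Cardinal.lt_aleph_one_iff]
      exact Cardinal.lt_ord.1 hγ
    exact this.image _
  · rw [sUnion_image, ← image_iUnion₂]
    congr 1
    ext ξ
    simpa using hgγ ξ
  · rintro _ ⟨i, hi, rfl⟩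
    exact (hrain i hi).image (c := fun ξ => col ξ) (hp.mono fun ξ hξ => hξ.1)

theorem StationaryChang.exists_isRainbow_isStationaryIn.{a, b, c, d, k} (hscc : StationaryChang)
    (hpar : OmegaOneRainbowPartition.{a, b, k}) {f : Ordinal.{c} → Ordinal.{c} → Ordinal.{d}}
    (hnormal : IsNormalColoring f (ℵ_ 2).ord) (hbdd : TypeBounded f (ℵ_ 2).ord (ℵ_ 2).ord) :
    ∃ A : Set Ordinal.{c}, A ⊆ Iio (ℵ_ 2).ord ∧ HasOType A (ℵ_ 1).ord ∧
      IsStationaryIn A (sSup A) ∧ IsRainbow f A := by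
  obtain ⟨A, hA, htype, hst, hbddOn⟩ := hscc.exists_typeBoundedOn hbdd
  obtain ⟨𝓑, h𝓑, rfl, hrainbow⟩ := hpar.exists_countable_sUnion_eq htype hA hnormal hbddOn
  obtain ⟨B, hB, hBtype, hBst⟩ := htype.exists_isStationaryIn_of_sUnion
    Cardinal.isRegular_aleph_one Cardinal.aleph0_lt_aleph_one h𝓑 (bddAbove_Iio.mono hA) hst
  exact ⟨B, (subset_sUnion_of_mem hB).trans hA, hBtype, hBst, hrainbow B hB⟩

/-- If the stationary Chang's Conjecture and `ω₁ →^poly (par(<ω₁))²_{<ω₁-t-bdd}` hold,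
then `ω₂ →^poly (ω₁-st)²_{<ω₂-t-bdd}`; in particular every normal `ω`-bounded coloring
on `[ω₂]²` has a rainbow set of order type `ω₁` stationary in its supremum. -/
theorem stmt9 (hscc : StationaryChang)
    (hpar : ∀ f : Ordinal → Ordinal → Ordinal,
      (∀ α β : Ordinal, α < β → β < (Cardinal.aleph 1).ord → f α β < (Cardinal.aleph 1).ord) →
      IsNormalColoring f (Cardinal.aleph 1).ord →
      TypeBounded f (Cardinal.aleph 1).ord (Cardinal.aleph 1).ord →
      ∃ γ : Ordinal, γ < (Cardinal.aleph 1).ord ∧ ∃ g : Ordinal → Ordinal,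
        (∀ ξ : Ordinal, ξ < (Cardinal.aleph 1).ord → g ξ < γ) ∧
        ∀ i : Ordinal, i < γ →
          IsRainbow f {ξ : Ordinal | ξ < (Cardinal.aleph 1).ord ∧ g ξ = i}) :
    (∀ f : Ordinal → Ordinal → Ordinal,
      (∀ α β : Ordinal, α < β → β < (Cardinal.aleph 2).ord → f α β < (Cardinal.aleph 2).ord) →
      IsNormalColoring f (Cardinal.aleph 2).ord →
      TypeBounded f (Cardinal.aleph 2).ord (Cardinal.aleph 2).ord →
      ∃ A : Set Ordinal, A ⊆ Set.Iio (Cardinal.aleph 2).ord ∧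
        HasOType A (Cardinal.aleph 1).ord ∧ IsStationaryIn A (sSup A) ∧ IsRainbow f A) ∧
    (∀ f : Ordinal → Ordinal → Ordinal,
      (∀ α β : Ordinal, α < β → β < (Cardinal.aleph 2).ord → f α β < (Cardinal.aleph 2).ord) →
      IsNormalColoring f (Cardinal.aleph 2).ord → OmegaBounded f (Cardinal.aleph 2).ord →
      ∃ A : Set Ordinal, A ⊆ Set.Iio (Cardinal.aleph 2).ord ∧
        HasOType A (Cardinal.aleph 1).ord ∧ IsStationaryIn A (sSup A) ∧ IsRainbow f A) := by
  exact ⟨fun f _ hnormal hbdd => hscc.exists_isRainbow_isStationaryIn hpar hnormal hbdd,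
    fun f _ hnormal hbdd => hscc.exists_isRainbow_isStationaryIn hpar hnormal
      (hbdd.typeBounded (Cardinal.ord_lt_ord.2 (Cardinal.aleph_lt_aleph.2 one_lt_two)))⟩
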